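/- The sequence (i_n)_{n≥1} of numbers of plus indecomposable permutations is not P-recursive. -/

import Mathlib

def PlusIndec {n : ℕ} (π : Equiv.Perm (Fin n)) : Prop :=
  ¬ ∃ k : ℕ, 1 ≤ k ∧ k < n ∧
    (Finset.univ.filter fun i : Fin n => (i : ℕ) < k).image π =
      Finset.univ.filter fun i : Fin n => (i : ℕ) < k

noncomputable def plusIndecCount (n : ℕ) : ℕ :=
  Nat.card {π : Equiv.Perm (Fin n) // PlusIndec π}

/-- A sequence `(aₙ)_{n≥1}` of rationals is P-recursive if there are polynomials
`p₀, …, p_d ∈ ℚ[x]` with `p_d ≠ 0` such that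
`p₀(n)aₙ + p₁(n)a_{n+1} + ⋯ + p_d(n)a_{n+d} = 0` for all `n ≥ 1`. -/
def IsPRecursive (a : ℕ → ℚ) : Prop :=
  ∃ (d : ℕ) (p : ℕ → Polynomial ℚ), p d ≠ 0 ∧
    ∀ n : ℕ, 1 ≤ n →
      ∑ i ∈ Finset.range (d + 1), (p i).eval (n : ℚ) * a (n + i) = 0

def Pres {n : ℕ} (π : Equiv.Perm (Fin n)) (k : ℕ) : Prop := ∀ i : Fin n, (i : ℕ) < k → (π i : ℕ) < k

lemma pres_iff {n : ℕ} (π : Equiv.Perm (Fin n)) (k : ℕ) :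
    (Finset.univ.filter fun i : Fin n => (i : ℕ) < k).image π =
      (Finset.univ.filter fun i : Fin n => (i : ℕ) < k) ↔ Pres π k := by
  constructor
  · intro h i hi
    have : π i ∈ (Finset.univ.filter fun i : Fin n => (i : ℕ) < k).image π :=
      Finset.mem_image_of_mem _ (by simpa using hi)
    rw [h] at this
    simpa using this
  · intro h
    apply Finset.eq_of_subset_of_card_le
    · intro j hj
      simp only [Finset.mem_image, Finset.mem_filter, Finset.mem_univ, true_and] at hj ⊢
      obtain ⟨i, hi, rfl⟩ := hj
      exact h i hi
    · rw [Finset.card_image_of_injective _ π.injective]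

lemma plusIndec_iff {n : ℕ} (π : Equiv.Perm (Fin n)) :
    PlusIndec π ↔ ∀ k, 1 ≤ k → k < n → ¬ Pres π k := by
  unfold PlusIndec
  simp only [pres_iff]
  push Not
  rfl

/-- `k` is the least positive block end. -/
def First {n : ℕ} (π : Equiv.Perm (Fin n)) (k : ℕ) : Prop :=
  1 ≤ k ∧ Pres π k ∧ ∀ j, 1 ≤ j → j < k → ¬ Pres π j

lemma exists_first {n : ℕ} (hn : 1 ≤ n) (π : Equiv.Perm (Fin n)) : ∃ k, k ≤ n ∧ First π k := by
  classical
  have hex : ∃ k, 1 ≤ k ∧ Pres π k := ⟨n, hn, fun i _ => (π i).2⟩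
  refine ⟨Nat.find hex, Nat.find_min' hex ⟨hn, fun i _ => (π i).2⟩, (Nat.find_spec hex).1,
    (Nat.find_spec hex).2, fun j hj hjk hp => Nat.find_min hex hjk ⟨hj, hp⟩⟩

lemma first_unique {n : ℕ} {π : Equiv.Perm (Fin n)} {k l : ℕ} (hk : First π k) (hl : First π l) :
    k = l := by
  rcases lt_trichotomy k l with h | h | h
  · exact absurd hk.2.1 (hl.2.2 k hk.1 h)
  · exact h
  · exact absurd hl.2.1 (hk.2.2 l hl.1 h)

/-- Direct sum of permutations. -/
def dsum {k m : ℕ} (x : Equiv.Perm (Fin k) × Equiv.Perm (Fin m)) : Equiv.Perm (Fin (k + m)) :=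
  finSumFinEquiv.permCongr (Equiv.Perm.sumCongrHom (Fin k) (Fin m) x)

lemma dsum_injective {k m : ℕ} : Function.Injective (dsum (k := k) (m := m)) := by
  intro x y h
  exact Equiv.Perm.sumCongrHom_injective (finSumFinEquiv.permCongr.injective h)

lemma dsum_castAdd {k m : ℕ} (x : Equiv.Perm (Fin k) × Equiv.Perm (Fin m)) (i : Fin k) :
    dsum x (Fin.castAdd m i) = Fin.castAdd m (x.1 i) := by
  simp [dsum, Equiv.permCongr_apply]

lemma dsum_pres {k m : ℕ} (x : Equiv.Perm (Fin k) × Equiv.Perm (Fin m)) {j : ℕ} (hj : j ≤ k) :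
    Pres (dsum x) j ↔ Pres x.1 j := by
  constructor
  · intro h i hi
    have := h (Fin.castAdd m i) (by simpa using hi)
    rw [dsum_castAdd] at this
    simpa using this
  · intro h i hi
    have : i = Fin.castAdd m ⟨i, by omega⟩ := by ext; simp
    rw [this, dsum_castAdd]
    exact h _ hi

lemma exists_dsum {k m : ℕ} (π : Equiv.Perm (Fin (k + m))) (h : Pres π k) :
    ∃ x, dsum x = π := by
  have : finSumFinEquiv.symm.permCongr π ∈ (Equiv.Perm.sumCongrHom (Fin k) (Fin m)).range := by
    apply Equiv.Perm.mem_sumCongrHom_range_of_perm_mapsTo_inl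
    rintro _ ⟨i, rfl⟩
    have h1 := h (Fin.castAdd m i) (by simp)
    refine ⟨⟨_, h1⟩, ?_⟩
    simp only [Equiv.permCongr_apply, Equiv.symm_symm, finSumFinEquiv_apply_left]
    rw [Equiv.eq_symm_apply]
    ext; simp
  obtain ⟨x, hx⟩ := this
  refine ⟨x, ?_⟩
  rw [dsum, hx]
  ext; simp [Equiv.permCongr_apply]

lemma card_first {k m n : ℕ} (h : k + m = n) (hk : 1 ≤ k) :
    Nat.card {π : Equiv.Perm (Fin n) // First π k} = plusIndecCount k * m.factorial := by
  subst h
  rw [plusIndecCount]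
  have hm : m.factorial = Nat.card (Equiv.Perm (Fin m)) := by
    simp [Nat.card_eq_fintype_card, Fintype.card_perm]
  rw [hm, ← Nat.card_prod]
  symm
  refine Nat.card_congr (Equiv.ofBijective (fun x => ⟨dsum (x.1.1, x.2), ?_⟩) ⟨?_, ?_⟩)
  · refine ⟨hk, (dsum_pres _ le_rfl).2 fun i _ => (x.1.1 i).2, fun j hj hjk => ?_⟩
    rw [dsum_pres _ hjk.le]
    exact (plusIndec_iff _).1 x.1.2 j hj hjk
  · rintro ⟨⟨s, hs⟩, t⟩ ⟨⟨s', hs'⟩, t'⟩ h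
    have := dsum_injective (Subtype.ext_iff.1 h)
    simp only [Prod.mk.injEq] at this
    obtain ⟨rfl, rfl⟩ := this
    rfl
  · rintro ⟨π, hπ⟩
    obtain ⟨⟨s, t⟩, rfl⟩ := exists_dsum π hπ.2.1
    refine ⟨⟨⟨s, (plusIndec_iff _).2 fun j hj hjk => ?_⟩, t⟩, rfl⟩
    have := hπ.2.2 j hj hjk
    rwa [dsum_pres _ hjk.le] at this

/-- The sequence with the value at zero replaced by zero. -/
noncomputable def ic (n : ℕ) : ℕ := if n = 0 then 0 else plusIndecCount n

lemma factorial_eq_sum {n : ℕ} (hn : 1 ≤ n) :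
    n.factorial = ∑ x ∈ Finset.HasAntidiagonal.antidiagonal n, ic x.1 * x.2.factorial := by
  classical
  choose f hf using fun π : Equiv.Perm (Fin n) => exists_first hn π
  have h1 : n.factorial = (Finset.univ : Finset (Equiv.Perm (Fin n))).card := by
    simp [Fintype.card_perm]
  rw [h1, Finset.card_eq_sum_card_fiberwise (f := fun π => (f π, n - f π))
    (t := Finset.HasAntidiagonal.antidiagonal n)]
  · refine Finset.sum_congr rfl fun x hx => ?_
    rw [Finset.HasAntidiagonal.mem_antidiagonal] at hx
    unfold ic
    split_ifs with h0
    · rw [zero_mul, Finset.card_eq_zero, Finset.filter_eq_empty_iff]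
      intro π _ h
      have := (hf π).2.1
      have h2 : f π = x.1 := congrArg Prod.fst h
      omega
    · rw [← card_first hx (by omega), Nat.card_eq_fintype_card, Fintype.card_subtype]
      congr 1
      ext π
      simp only [Finset.mem_filter, Finset.mem_univ, true_and]
      constructor
      · intro h
        have h2 : f π = x.1 := congrArg Prod.fst h
        rw [← h2]; exact (hf π).2
      · intro h
        have h2 : f π = x.1 := first_unique (hf π).2 h
        ext <;> simp <;> omega
  · intro π _
    have := (hf π).1
    simp; omega


open PowerSeries in
/-- The series of factorials. -/
noncomputable def serF : ℚ⟦X⟧ := PowerSeries.mk fun n => (n.factorial : ℚ)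

open PowerSeries in
/-- The series of plus indecomposables. -/
noncomputable def serI : ℚ⟦X⟧ := PowerSeries.mk fun n => (ic n : ℚ)

lemma serF_eq : serF = 1 + serI * serF := by
  ext n
  rw [map_add, PowerSeries.coeff_mul, PowerSeries.coeff_one]
  simp only [serF, serI, PowerSeries.coeff_mk]
  split_ifs with h
  · subst h; simp [ic]
  · rw [factorial_eq_sum (by omega : 1 ≤ n)]
    push_cast
    ring

lemma FG : serF * (1 - serI) = 1 := by
  have := serF_eq
  linear_combination this

/-- The derivation `x² d/dx`. -/
noncomputable def DD (f : PowerSeries ℚ) : PowerSeries ℚ :=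
  PowerSeries.X ^ 2 * PowerSeries.derivative ℚ f

lemma DD_add (f g : PowerSeries ℚ) : DD (f + g) = DD f + DD g := by
  simp [DD, mul_add]

lemma DD_mul (f g : PowerSeries ℚ) : DD (f * g) = f * DD g + g * DD f := by
  simp [DD]; ring

lemma DD_pow (f : PowerSeries ℚ) (n : ℕ) : DD (f ^ n) = n * f ^ (n - 1) * DD f := by
  simp [DD]; ring

lemma DD_F : DD serF = (1 - PowerSeries.X) * serF - 1 := by
  ext n
  rcases n with _ | _ | n
  · simp [DD, serF, sub_mul]
  · have : DD serF = PowerSeries.X * (PowerSeries.X * PowerSeries.derivative ℚ serF) := by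
      rw [DD]; ring
    rw [this]
    simp [sub_mul, serF, PowerSeries.coeff_succ_X_mul, PowerSeries.coeff_one]
  · rw [DD, show n + 1 + 1 = n + 2 from rfl, PowerSeries.coeff_X_pow_mul]
    simp only [sub_mul, one_mul, map_sub, serF, PowerSeries.coeff_succ_X_mul,
      PowerSeries.coeff_one, PowerSeries.coeff_mk, PowerSeries.coeff_derivative]
    simp [Nat.factorial_succ]
    ring

lemma DD_G : DD (1 - serI) = (1 - serI) ^ 2 + (PowerSeries.X - 1) * (1 - serI) := by
  have h1 := FG
  have h2 := DD_F
  have h3 : serF * DD (1 - serI) + (1 - serI) * DD serF = 0 := by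
    rw [← DD_mul, h1]; simp [DD]
  rw [h2] at h3
  generalize 1 - serI = G at *
  generalize DD G = G' at *
  linear_combination G * h3 - (G' + (1 - PowerSeries.X) * G) * h1

/-- Coercion of polynomials. -/
noncomputable abbrev cc : Polynomial ℚ →+* PowerSeries ℚ := Polynomial.coeToPowerSeries.ringHom

open Polynomial in
lemma exists_delta (P : ℚ[X][X]) : ∃ P' : ℚ[X][X],
    (∀ k, P'.coeff k = X ^ 2 * derivative (P.coeff k)) ∧
    ∀ g : PowerSeries ℚ, DD (P.eval₂ cc g) =
      P'.eval₂ cc g + (derivative P).eval₂ cc g * DD g := by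
  induction P using Polynomial.induction_on' with
  | add p q hp hq =>
    obtain ⟨p', hp1, hp2⟩ := hp
    obtain ⟨q', hq1, hq2⟩ := hq
    refine ⟨p' + q', fun k => ?_, fun g => ?_⟩
    · simp [hp1, hq1, mul_add]
    · simp only [eval₂_add, DD_add, hp2, hq2, derivative_add]
      ring
  | monomial n a =>
    refine ⟨monomial n (X ^ 2 * derivative a), fun k => ?_, fun g => ?_⟩
    · rw [coeff_monomial, coeff_monomial]
      split_ifs <;> simp
    · have : DD (cc a) = cc (X ^ 2 * derivative a) := by
        simp [DD, PowerSeries.derivative_coe]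
      rw [derivative_monomial, eval₂_monomial, eval₂_monomial, eval₂_monomial, DD_mul, DD_pow, this]
      simp only [map_mul, map_natCast]
      ring

open Polynomial in
lemma no_poly {a b : ℚ[X]} (ha : a ≠ 0) {m : ℕ} (hm : m ≠ 0)
    (h : X ^ 2 * (a * derivative b - derivative a * b) = (1 - X) * a * b + (m : ℚ[X]) * a ^ 2) :
    False := by
  have hb : b ≠ 0 := by
    rintro rfl
    simp [hm, ha] at h
  have hm' : (m : ℚ) ≠ 0 := by exact_mod_cast hm
  have hθ : ∀ (p : ℚ[X]) (k : ℕ), (X * derivative p).coeff k = k * p.coeff k := by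
    intro p k
    cases k with
    | zero => simp
    | succ k => rw [coeff_X_mul, coeff_derivative]; push_cast; ring
  have hθd : ∀ (p : ℚ[X]) (k : ℕ), p.natDegree ≤ k → (X * derivative p).natDegree ≤ k := by
    intro p k hk
    rw [natDegree_le_iff_coeff_eq_zero]
    intro N hN
    rw [hθ, coeff_eq_zero_of_natDegree_lt (by omega), mul_zero]
  have h' : X * (a * (X * derivative b) - (X * derivative a) * b + a * b) =
      a * b + C (m : ℚ) * (a * a) := by
    simp only [map_natCast]
    linear_combination h
  have hla : a.coeff a.natDegree ≠ 0 := by simpa using ha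
  have hlb : b.coeff b.natDegree ≠ 0 := by simpa using hb
  have key : ∀ g : ℕ, b.natDegree ≤ g →
      ((g : ℚ) - a.natDegree + 1) * (a.coeff a.natDegree * b.coeff g) =
        m * (a * a).coeff (a.natDegree + g + 1) := by
    intro g hg
    have := congrArg (fun p => coeff p (a.natDegree + g + 1)) h'
    simp only [coeff_X_mul, coeff_add, coeff_sub, coeff_C_mul] at this
    rw [coeff_mul_add_eq_of_natDegree_le le_rfl (hθd b g hg), coeff_mul_add_eq_of_natDegree_le (hθd a _ le_rfl) hg,
      coeff_mul_add_eq_of_natDegree_le le_rfl hg, hθ, hθ,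
      coeff_eq_zero_of_natDegree_lt (p := a * b)
        (lt_of_le_of_lt natDegree_mul_le (by omega)), zero_add] at this
    rw [← this]; ring
  rcases le_or_gt a.natDegree b.natDegree with hab | hab
  · have := key _ le_rfl
    rw [coeff_eq_zero_of_natDegree_lt (p := a * a)
      (lt_of_le_of_lt natDegree_mul_le (by omega)), mul_zero] at this
    have h3 : (a.natDegree : ℚ) ≤ b.natDegree := by exact_mod_cast hab
    have h4 : (b.natDegree : ℚ) - a.natDegree + 1 ≠ 0 := by linarith
    exact (mul_ne_zero h4 (mul_ne_zero hla hlb)) this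
  · obtain ⟨g, hg⟩ : ∃ g, a.natDegree = g + 1 := ⟨a.natDegree - 1, by omega⟩
    have := key g (by omega)
    rw [add_assoc, ← hg, coeff_mul_add_eq_of_natDegree_le le_rfl le_rfl] at this
    rw [show (g : ℚ) - a.natDegree + 1 = 0 by rw [hg]; push_cast; ring, zero_mul] at this
    exact (mul_ne_zero hm' (mul_ne_zero hla hla)) this.symm

open Polynomial in
lemma serF_transc (P : ℚ[X][X]) (hP : P ≠ 0) : P.eval₂ cc serF ≠ 0 := by
  induction hm : P.natDegree using Nat.strong_induction_on generalizing P with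
  | _ m ih =>
  intro h0
  obtain ⟨P', hc, hd⟩ := exists_delta P
  have hD := hd serF
  have hDh : ((1 - C X) * X - 1 : ℚ[X][X]).eval₂ cc serF = DD serF := by
    rw [DD_F]; simp
  have h00 : DD 0 = 0 := by simp [DD]
  rw [h0, h00, ← hDh, ← eval₂_mul, ← eval₂_add] at hD
  rcases Nat.eq_zero_or_pos m with hm0 | hmpos
  · rw [hm0] at hm
    obtain ⟨c, rfl⟩ := natDegree_eq_zero.1 hm
    rw [eval₂_C] at h0
    apply hP
    have : c = 0 := Polynomial.coe_injective ℚ (by simpa using h0)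
    simp [this]
  obtain ⟨r, rfl⟩ : ∃ r, m = r + 1 := ⟨m - 1, by omega⟩
  set a := P.coeff (r + 1) with ha
  set b := P.coeff r with hb
  have ha0 : a ≠ 0 := by rw [ha, ← hm]; simpa using hP
  set S := P' + derivative P * ((1 - C X) * X - 1) with hS
  have hScoef : ∀ k, S.coeff (k+1) = X ^ 2 * derivative (P.coeff (k+1)) +
      (1 - X) * (P.coeff (k + 1) * ((k : ℚ[X]) + 1)) - P.coeff (k + 2) * ((k : ℚ[X]) + 2) := by
    intro k
    have : S = P' + C (1 - X) * (derivative P * X) - derivative P := by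
      rw [hS]; simp; ring
    rw [this]
    simp only [coeff_sub, coeff_add, hc, coeff_C_mul, coeff_mul_X, coeff_derivative]
    push_cast
    ring
  have hScoef0 : S.coeff 0 = X ^ 2 * derivative (P.coeff 0) - P.coeff 1 := by
    have : S = P' + C (1 - X) * (derivative P * X) - derivative P := by
      rw [hS]; simp; ring
    rw [this]
    simp only [coeff_sub, coeff_add, hc, coeff_C_mul, coeff_mul_X_zero, coeff_derivative]
    push_cast
    ring
  have hhigh : ∀ k, r + 1 < k → P.coeff k = 0 := fun k hk =>
    coeff_eq_zero_of_natDegree_lt (by omega)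
  set W := C a * S - C (S.coeff (r + 1)) * P with hW
  have hW0 : W.eval₂ cc serF = 0 := by
    rw [hW, eval₂_sub, eval₂_mul, eval₂_mul, ← hD, h0]; simp
  have hWc : ∀ k, r < k → W.coeff k = 0 := by
    intro k hk
    rcases eq_or_lt_of_le (Nat.succ_le_of_lt hk) with h | h
    · subst h
      rw [hW]; simp [← ha]; ring
    · obtain ⟨j, rfl⟩ : ∃ j, k = j + 1 := ⟨k - 1, by omega⟩
      rw [hW, coeff_sub, coeff_C_mul, coeff_C_mul, hScoef j, hhigh (j + 1) h,
        hhigh (j + 2) (by omega)]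
      simp
  have hWz : W = 0 := by
    by_contra hne
    have hle : W.natDegree ≤ r := by
      rw [natDegree_le_iff_coeff_eq_zero]
      exact hWc
    exact ih _ (by omega) W hne rfl hW0
  have hWr : a * S.coeff r = S.coeff (r + 1) * b := by
    have := congrArg (fun Q => coeff Q r) hWz
    simp only [hW, coeff_sub, coeff_C_mul, coeff_zero] at this
    rw [hb]; linear_combination this
  have h1 := hScoef r
  rw [hhigh (r + 2) (by omega), ← ha] at h1
  have h2 : S.coeff r = X ^ 2 * derivative b + (1 - X) * (b * (r : ℚ[X])) - a * ((r : ℚ[X]) + 1) := by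
    rcases r with _ | r
    · rw [hScoef0]; simp [← ha, ← hb]
    · rw [hScoef r, ← hb]
      have : P.coeff (r + 2) = a := rfl
      rw [this]; push_cast; ring
  rw [h1, h2] at hWr
  refine no_poly (a := a) (b := b) ha0 (m := r + 1) (by omega) ?_
  push_cast
  linear_combination hWr

open Polynomial in
lemma serG_transc (P : ℚ[X][X]) (hP : P ≠ 0) : P.eval₂ cc (1 - serI) ≠ 0 := by
  intro h
  let _ : Invertible (1 - serI) := ⟨serF, FG, by rw [mul_comm]; exact FG⟩
  have h2 : ⅟(1 - serI) = serF := rfl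
  have := (eval₂_reverse_eq_zero_iff cc (1 - serI) P).2 h
  rw [h2] at this
  exact serF_transc _ (by simpa using hP) this

/-- `θ^k` applied to the series `1 - I`. -/
noncomputable def serT (k : ℕ) : PowerSeries ℚ :=
  PowerSeries.mk fun n => (n : ℚ) ^ k * PowerSeries.coeff n (1 - serI)

lemma serT_succ (k : ℕ) : PowerSeries.X * PowerSeries.derivative ℚ (serT k) = serT (k + 1) := by
  ext n
  cases n with
  | zero => simp [serT]
  | succ n =>
    rw [PowerSeries.coeff_succ_X_mul, PowerSeries.coeff_derivative]
    simp only [serT, PowerSeries.coeff_mk]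
    push_cast
    ring

open Polynomial in
lemma exists_theta (k : ℕ) : ∃ P : ℚ[X][X], P.natDegree ≤ k + 1 ∧
    P.coeff (k + 1) = (k.factorial : ℚ[X]) ∧
    P.eval₂ cc (1 - serI) = PowerSeries.X ^ k * serT k := by
  induction k with
  | zero =>
    refine ⟨X, natDegree_X_le, by simp, ?_⟩
    rw [eval₂_X]
    ext n
    simp [serT]
  | succ k ih =>
    obtain ⟨P, h1, h2, h3⟩ := ih
    obtain ⟨P', hc, hd⟩ := exists_delta P
    have hhigh : ∀ j, k + 1 < j → P.coeff j = 0 := fun j hj =>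
      coeff_eq_zero_of_natDegree_lt (by omega)
    refine ⟨P' + derivative P * X * X + C (X - 1) * (derivative P * X) - C ((k : ℚ[X]) * X) * P,
      ?_, ?_, ?_⟩
    · rw [natDegree_le_iff_coeff_eq_zero]
      intro N hN
      obtain ⟨j, rfl⟩ : ∃ j, N = j + 1 + 1 := ⟨N - 2, by omega⟩
      simp only [coeff_sub, coeff_add, coeff_C_mul, coeff_mul_X, hc, coeff_derivative]
      rw [hhigh (j + 1) (by omega), hhigh (j + 1 + 1) (by omega)]
      simp
    · simp only [coeff_sub, coeff_add, coeff_C_mul, coeff_mul_X, hc, coeff_derivative]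
      rw [hhigh (k + 1 + 1) (by omega), h2]
      simp [Nat.factorial_succ]
      ring
    · have hD := hd (1 - serI)
      rw [h3, DD_G, DD_mul, DD_pow] at hD
      have hT : DD (serT k) = PowerSeries.X * serT (k + 1) := by
        rw [← serT_succ, DD]; ring
      have hX : DD PowerSeries.X = PowerSeries.X ^ 2 := by simp [DD]
      rw [hT, hX] at hD
      simp only [eval₂_sub, eval₂_add, eval₂_mul, eval₂_C, eval₂_X, h3]
      have hcX : cc X = PowerSeries.X := by simp
      simp only [map_sub, map_mul, map_one, map_natCast, hcX]
      have hk : (k : PowerSeries ℚ) * PowerSeries.X ^ (k - 1) * PowerSeries.X ^ 2 =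
          (k : PowerSeries ℚ) * PowerSeries.X * PowerSeries.X ^ k := by
        cases k with
        | zero => simp
        | succ k => simp; ring
      linear_combination -hD + serT k * hk

open Polynomial in
theorem main_aux (d : ℕ) (q : ℕ → ℚ[X]) (hq : q d ≠ 0)
    (h : ∀ n : ℕ, 1 ≤ n → ∑ i ∈ Finset.range (d + 1),
      (q i).eval ((n + i : ℕ) : ℚ) * PowerSeries.coeff (n + i) (1 - serI) = 0) : False := by
  classical
  obtain ⟨i0, hi0, hmax⟩ := Finset.exists_max_image
    ((Finset.range (d + 1)).filter fun i => q i ≠ 0) (fun i => (q i).natDegree)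
    ⟨d, by simp [hq]⟩
  simp only [Finset.mem_filter, Finset.mem_range] at hi0 hmax
  set K := (q i0).natDegree with hK
  have hdeg : ∀ i, i ≤ d → (q i).natDegree ≤ K := by
    intro i hi
    by_cases h0 : q i = 0
    · simp [h0]
    · exact hmax i ⟨by omega, h0⟩
  choose P hP1 hP2 hP3 using exists_theta
  -- the series `∑ x^(d-i) q_i(θ) G`
  set R : PowerSeries ℚ := ∑ i ∈ Finset.range (d + 1), ∑ k ∈ Finset.range (K + 1),
    cc (C ((q i).coeff k) * X ^ (d - i)) * serT k with hR
  have hRc : ∀ N, d < N → PowerSeries.coeff N R = 0 := by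
    intro N hN
    obtain ⟨n, rfl⟩ : ∃ n, N = n + d := ⟨N - d, by omega⟩
    rw [← h n (by omega), hR, map_sum]
    refine Finset.sum_congr rfl fun i hi => ?_
    rw [Finset.mem_range] at hi
    rw [map_sum, eval_eq_sum_range' (n := K + 1) (by have := hdeg i (by omega); omega),
      Finset.sum_mul]
    refine Finset.sum_congr rfl fun k _ => ?_
    have : n + d = (n + i) + (d - i) := by omega
    simp only [map_mul, map_pow, Polynomial.coeToPowerSeries.ringHom_apply, coe_C, coe_X]
    rw [mul_assoc, PowerSeries.coeff_C_mul, this, PowerSeries.coeff_X_pow_mul, serT,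
      PowerSeries.coeff_mk]
    ring
  have hRp : R = cc (PowerSeries.trunc (d + 1) R) := by
    ext N
    simp only [Polynomial.coeToPowerSeries.ringHom_apply, coeff_coe, PowerSeries.coeff_trunc]
    split_ifs with hN
    · rfl
    · exact hRc N (by omega)
  set r := PowerSeries.trunc (d + 1) R
  let W : ℚ[X][X] := (∑ i ∈ Finset.range (d + 1), ∑ k ∈ Finset.range (K + 1),
    C (C ((q i).coeff k) * X ^ (d - i) * X ^ (K - k)) * P k) - C (X ^ K * r)
  have hW : W.eval₂ cc (1 - serI) = 0 := by
    simp only [W, eval₂_sub, eval₂_finsetSum, eval₂_mul, eval₂_C, hP3]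
    rw [map_mul, ← hRp, hR, Finset.mul_sum, sub_eq_zero]
    refine Finset.sum_congr rfl fun i _ => ?_
    rw [Finset.mul_sum]
    refine Finset.sum_congr rfl fun k hk => ?_
    rw [Finset.mem_range] at hk
    have hcX : cc X = PowerSeries.X := by simp
    have : (PowerSeries.X : PowerSeries ℚ) ^ K = PowerSeries.X ^ (K - k) * PowerSeries.X ^ k := by
      rw [← pow_add]; congr 1; omega
    simp only [map_mul, map_pow, hcX]
    rw [this]; ring
  refine serG_transc W ?_ hW
  intro hW0
  have h1 : W.coeff (K + 1) = ∑ i ∈ Finset.range (d + 1),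
      C ((q i).coeff K) * X ^ (d - i) * (K.factorial : ℚ[X]) := by
    simp only [W, coeff_sub, finsetSum_coeff, coeff_C_mul, coeff_C_succ, sub_zero]
    refine Finset.sum_congr rfl fun i _ => ?_
    rw [Finset.sum_eq_single K]
    · simp [hP2]
    · intro k hk hkK
      rw [Finset.mem_range] at hk
      rw [coeff_eq_zero_of_natDegree_lt (p := P k) (by have := hP1 k; omega), mul_zero]
    · simp
  rw [hW0, coeff_zero] at h1
  have h2 := congrArg (fun p => coeff p (d - i0)) h1
  simp only [coeff_zero, finsetSum_coeff] at h2
  rw [Finset.sum_eq_single i0] at h2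
  · rw [mul_assoc, coeff_C_mul, mul_comm (X ^ _), ← C_eq_natCast, coeff_C_mul, coeff_X_pow] at h2
    have h3 : (q i0).coeff K ≠ 0 := by rw [hK]; simpa using hi0.2
    have h4 : (K.factorial : ℚ) ≠ 0 := by exact_mod_cast K.factorial_ne_zero
    simp [h3, h4] at h2
  · intro i hi hne
    rw [Finset.mem_range] at hi
    rw [mul_assoc, coeff_C_mul, mul_comm (X ^ _), ← C_eq_natCast, coeff_C_mul, coeff_X_pow,
      if_neg (by omega)]
    simp
  · simp; omega

/-- The sequence `(iₙ)_{n≥1}` of numbers of plus indecomposable permutations is not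
P-recursive. -/
theorem plusIndecCount_not_PRecursive :
    ¬ IsPRecursive (fun n => (plusIndecCount n : ℚ)) := by
  rintro ⟨d, p, hpd, h⟩
  refine main_aux d (fun i => (p i).comp (Polynomial.X - Polynomial.C (i : ℚ))) ?_ ?_
  · intro h0
    apply hpd
    have := congrArg (fun s => Polynomial.comp s (Polynomial.X + Polynomial.C (d : ℚ))) h0
    simpa [Polynomial.comp_assoc] using this
  · intro n hn
    rw [← neg_eq_zero, ← Finset.sum_neg_distrib, ← h n hn]
    refine Finset.sum_congr rfl fun i _ => ?_
    simp [Polynomial.eval_comp, serI, ic, PowerSeries.coeff_one]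
    have h2 : n ≠ 0 := by omega
    simp [h2]
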